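/- arXiv:1311.0335 — 2 statements merged into one kernel-verified Lean document; each statement's English description precedes it below -/
import Mathlib

section
/- A real number R in [0,1) is normal to base b if and only if for every integer ℓ ≥ 1, lim_{n→∞} D_ℓ((R)_b↾n, b) = 0. -/
open Filter

/-- The `(i+1)`-st digit (for `i = 0, 1, 2, ...`) of the base-`b` expansion of a real
`R ∈ [0,1)`.  For such `R` this is the unique expansion whose digits are not eventually
all equal to `b - 1`. -/
noncomputable def rdigit (b : ℕ) (R : ℝ) (i : ℕ) : ℕ := (⌊R * (b : ℝ) ^ (i + 1)⌋).toNat % b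

/-- The block consisting of the first `n` digits of the base-`b` expansion of `R`. -/
noncomputable def rdigits (b : ℕ) (R : ℝ) (n : ℕ) : List ℕ := (List.range n).map (rdigit b R)

/-- `R` is simply normal to base `b`: every digit `d < b` occurs with limiting
frequency `1/b` in the base-`b` expansion of `R`. -/
def SimplyNormal (b : ℕ) (R : ℝ) : Prop :=
  ∀ d < b, Tendsto (fun n => ((rdigits b R n).count d : ℝ) / n) atTop (nhds (1 / (b : ℝ)))

/-- `R` is normal to base `b`: it is simply normal to base `b ^ ℓ` for every `ℓ ≥ 1`. -/
def NormalBase (b : ℕ) (R : ℝ) : Prop := ∀ ℓ : ℕ, 1 ≤ ℓ → SimplyNormal (b ^ ℓ) R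


/-- The number of occurrences of the block `v` in the block `u`: the number of
positions `i` (0-indexed) at which `v` occurs as a contiguous subblock of `u`. -/
def occBlock (u v : List ℕ) : ℕ :=
  ((Finset.range (u.length + 1 - v.length)).filter fun i => (u.drop i).take v.length = v).card

/-- The block discrepancy `D_ℓ(u, b)` of the block `u` to blocks of length `ℓ` in base `b`:
the maximum over all blocks `v` of length `ℓ` in base `b` of `|occ(u,v)/|u| − 1/b^ℓ|`. -/
noncomputable def blockDisc (ℓ b : ℕ) (u : List ℕ) : ℝ :=
  sSup ((fun v => |(occBlock u v : ℝ) / u.length - 1 / (b : ℝ) ^ ℓ|) ''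
    {v : List ℕ | v.length = ℓ ∧ ∀ d ∈ v, d < b})

/-! The blocks that matter for normality sit at the multiples of `ℓ` and do not overlap, whereas
the block discrepancy looks at the blocks at all positions. Cut the expansion into consecutive
blocks of a large length `L`: a block of length `ℓ` lies inside one of them unless it starts at
one of the last `ℓ - 1` of the `L` residues, so equidistribution of the aligned blocks of length
`L` controls all but a proportion `ℓ / L` of the positions.

Conversely, let `F` be a function with average `0` on the blocks of length `ℓ`, and let `f i` be
its value at the block at position `i`. If blocks of every length are equidistributed over all
positions, then `f i` and `f (i + t * ℓ)` are uncorrelated for `t ≠ 0`, because they depend on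
disjoint parts of a block of length `(t + 1) * ℓ`. Hence the average of `H` terms of `f` at
distance `ℓ` has mean square at most `C / H` over all positions, so at most `ℓ * C / H` over the
multiples of `ℓ`. As such averages do not change the mean of `f` over the multiples of `ℓ`, this
mean is `0` (van der Corput's trick). -/

open Finset
open scoped BigOperators InnerProductSpace Topology

lemma norm_sum_range_le_mul {E : Type*} [SeminormedAddCommGroup E] {f : ℕ → E} {C : ℝ}
    (hf : ∀ i, ‖f i‖ ≤ C) (n : ℕ) :
    ‖∑ i ∈ range n, f i‖ ≤ n * C :=
  (norm_sum_le_of_le _ fun i _ => hf i).trans_eq (by simp)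

lemma norm_sum_range_sub_sum_range_le {E : Type*} [SeminormedAddCommGroup E] {f : ℕ → E} {C : ℝ}
    (hf : ∀ i, ‖f i‖ ≤ C) (m n : ℕ) :
    ‖∑ i ∈ range m, f i - ∑ i ∈ range n, f i‖ ≤ |(m : ℝ) - n| * C := by
  wlog hmn : m ≤ n generalizing m n
  · rw [norm_sub_rev, abs_sub_comm]
    exact this n m (by omega)
  obtain ⟨d, rfl⟩ := Nat.exists_eq_add_of_le hmn
  rw [sum_range_add, sub_add_cancel_left, norm_neg]
  simpa using norm_sum_range_le_mul (fun i => hf (m + i)) d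

lemma sum_range_mul {M : Type*} [AddCommMonoid M] (f : ℕ → M) (q L : ℕ) :
    ∑ i ∈ range (q * L), f i = ∑ k ∈ range q, ∑ j ∈ range L, f (k * L + j) := by
  induction q with
  | zero => simp
  | succ q ih => rw [Nat.succ_mul, sum_range_add, ih, sum_range_succ]

lemma sum_range_mul_le_sum_range {u : ℕ → ℝ} {ℓ : ℕ} (hu : ∀ i, 0 ≤ u i) (hℓ : ℓ ≠ 0)
    (q : ℕ) :
    ∑ k ∈ range q, u (k * ℓ) ≤ ∑ i ∈ range (q * ℓ), u i := by
  rw [sum_range_mul]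
  gcongr with k
  exact single_le_sum (f := fun j => u (k * ℓ + j)) (fun _ _ => hu _)
    (mem_range.2 (Nat.pos_of_ne_zero hℓ))

lemma eventually_norm_sum_mul_le {E : Type*} [SeminormedAddCommGroup E] {v : ℕ → E} {δ ε : ℝ}
    {ℓ : ℕ} (hℓ : ℓ ≠ 0) (hε : 0 ≤ ε) (hδ : δ * ℓ ≤ ε ^ 2)
    (h : ∀ᶠ n : ℕ in atTop, ∑ i ∈ range n, ‖v i‖ ^ 2 ≤ δ * n) :
    ∀ᶠ q : ℕ in atTop, ‖∑ k ∈ range q, v (k * ℓ)‖ ≤ ε * q := by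
  have hmul : Tendsto (fun q : ℕ => q * ℓ) atTop atTop :=
    tendsto_id.atTop_mul_const' (Nat.pos_of_ne_zero hℓ)
  filter_upwards [hmul.eventually h] with q hq
  refine (norm_sum_le _ _).trans (le_of_sq_le_sq ?_ (by positivity))
  calc (∑ k ∈ range q, ‖v (k * ℓ)‖) ^ 2
      ≤ q * ∑ k ∈ range q, ‖v (k * ℓ)‖ ^ 2 := by
        simpa using sq_sum_le_card_mul_sum_sq (s := range q) (f := fun k => ‖v (k * ℓ)‖)
    _ ≤ q * (δ * (q * ℓ : ℕ)) := by
        gcongr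
        exact (sum_range_mul_le_sum_range (fun i => sq_nonneg ‖v i‖) hℓ q).trans hq
    _ = q ^ 2 * (δ * ℓ) := by push_cast; ring
    _ ≤ q ^ 2 * ε ^ 2 := by gcongr
    _ = (ε * q) ^ 2 := by ring

lemma tendsto_natCast_div_div_atTop (L : ℕ) :
    Tendsto (fun n : ℕ => ((n / L : ℕ) : ℝ) / n) atTop (𝓝 (L : ℝ)⁻¹) := by
  refine ((tendsto_nat_floor_mul_div_atTop (inv_nonneg.2 L.cast_nonneg)).comp
    tendsto_natCast_atTop_atTop).congr fun n => ?_
  rw [Function.comp_apply, inv_mul_eq_div, Nat.floor_div_natCast, Nat.floor_natCast]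

section CesaroMean

variable {E : Type*} [SeminormedAddCommGroup E] [NormedSpace ℝ E] {f g : ℕ → E} {a c : E} {C : ℝ}

/-- The sequence `f` has Cesàro mean `a`. For the indicator of a set of indices this says that the
set has natural density `a`. -/
def HasMean (f : ℕ → E) (a : E) : Prop :=
  Tendsto (fun n : ℕ => (n : ℝ)⁻¹ • ∑ i ∈ range n, f i) atTop (𝓝 a)

lemma hasMean_const (a : E) : HasMean (fun _ => a) a := by
  refine tendsto_const_nhds.congr' ?_
  filter_upwards [eventually_ne_atTop 0] with n hn
  rw [sum_const, card_range, ← Nat.cast_smul_eq_nsmul ℝ, inv_smul_smul₀ (by exact_mod_cast hn)]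

lemma HasMean.sub (hf : HasMean f a) (hg : HasMean g c) : HasMean (fun i => f i - g i) (a - c) := by
  simpa only [HasMean, sum_sub_distrib, smul_sub] using Tendsto.sub hf hg

lemma HasMean.const_smul (r : ℝ) (hf : HasMean f a) : HasMean (fun i => r • f i) (r • a) := by
  simpa only [HasMean, ← smul_sum, smul_comm r] using Tendsto.const_smul hf r

lemma hasMean_sum {ι : Type*} (s : Finset ι) {f : ι → ℕ → E} {a : ι → E}
    (h : ∀ j ∈ s, HasMean (f j) (a j)) : HasMean (fun i => ∑ j ∈ s, f j i) (∑ j ∈ s, a j) := by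
  simpa only [HasMean, smul_sum, sum_comm (s := s)] using tendsto_finsetSum s h

lemma hasMean_sub_const_iff : HasMean (fun i => f i - a) 0 ↔ HasMean f a := by
  refine ⟨fun h => ?_, fun h => ?_⟩
  · simpa using h.sub (hasMean_const (-a))
  · simpa using h.sub (hasMean_const a)

lemma tendsto_inv_smul_iff_hasMean {S : ℕ → E} (h : ∀ n, ‖S n - ∑ i ∈ range n, f i‖ ≤ C) :
    Tendsto (fun n : ℕ => (n : ℝ)⁻¹ • S n) atTop (𝓝 a) ↔ HasMean f a := by
  refine tendsto_iff_of_dist (squeeze_zero (fun _ => dist_nonneg) (fun n => ?_)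
    (tendsto_const_div_atTop_nhds_zero_nat C))
  rw [dist_eq_norm, ← smul_sub, norm_smul, norm_inv, Real.norm_natCast, div_eq_inv_mul]
  gcongr
  exact h n

lemma hasMean_sub_shift (hf : ∀ i, ‖f i‖ ≤ C) (s : ℕ) :
    HasMean (fun i => f i - f (i + s)) 0 := by
  refine (tendsto_inv_smul_iff_hasMean (S := 0) (C := s * C + s * C) fun n => ?_).1
    (by simpa using tendsto_const_nhds)
  have hsplit : ∑ i ∈ range n, (f i - f (i + s)) =
      ∑ i ∈ range s, f i - ∑ i ∈ range s, f (n + i) := by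
    have hs := sum_range_add f s n
    rw [add_comm s n, sum_range_add f n s] at hs
    simp only [sum_sub_distrib, add_comm _ s]
    rw [sub_eq_sub_iff_add_eq_add, hs]
  rw [Pi.zero_apply, zero_sub, norm_neg, hsplit]
  exact (norm_sub_le _ _).trans (add_le_add (norm_sum_range_le_mul hf s)
    (norm_sum_range_le_mul (fun _ => hf _) s))

lemma HasMean.shift (h : HasMean f a) (hf : ∀ i, ‖f i‖ ≤ C) (s : ℕ) :
    HasMean (fun i => f (i + s)) a := by
  simpa using h.sub (hasMean_sub_shift hf s)

lemma HasMean.eventually_sum_le {f : ℕ → ℝ} {a c : ℝ} (h : HasMean f a) (hac : a < c) :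
    ∀ᶠ n : ℕ in atTop, ∑ i ∈ range n, f i ≤ c * n := by
  filter_upwards [h.eventually_lt_const hac, eventually_gt_atTop 0] with n hn hpos
  rw [smul_eq_mul, inv_mul_eq_div, div_lt_iff₀ (by exact_mod_cast hpos)] at hn
  exact hn.le

lemma hasMean_of_forall_exists_norm_sum_sub_le (h : ∀ ε > 0, ∃ g : ℕ → E, HasMean g a ∧
    ∀ᶠ n : ℕ in atTop, ‖∑ i ∈ range n, (f i - g i)‖ ≤ ε * n) : HasMean f a := by
  refine Metric.tendsto_nhds.2 fun ε hε => ?_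
  obtain ⟨g, hg, hfg⟩ := h (ε / 2) (half_pos hε)
  filter_upwards [hfg, Metric.tendsto_nhds.1 hg (ε / 2) (half_pos hε), eventually_gt_atTop 0]
    with n hn hgn hpos
  have hpos' : (0 : ℝ) < n := by exact_mod_cast hpos
  have hclose : dist ((n : ℝ)⁻¹ • ∑ i ∈ range n, f i) ((n : ℝ)⁻¹ • ∑ i ∈ range n, g i) ≤ ε / 2 := by
    rwa [dist_eq_norm, ← smul_sub, ← sum_sub_distrib, norm_smul, norm_inv, Real.norm_natCast,
      inv_mul_le_iff₀' hpos']
  linarith [dist_triangle ((n : ℝ)⁻¹ • ∑ i ∈ range n, f i) ((n : ℝ)⁻¹ • ∑ i ∈ range n, g i) a]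

lemma hasMean_of_hasMean_residue {L : ℕ} (hL : L ≠ 0) {a : ℕ → E} (hf : ∀ i, ‖f i‖ ≤ C)
    (h : ∀ j < L, HasMean (fun k => f (k * L + j)) (a j)) :
    HasMean f ((L : ℝ)⁻¹ • ∑ j ∈ range L, a j) := by
  have hC : 0 ≤ C := (norm_nonneg _).trans (hf 0)
  have hblock : HasMean (fun k => ∑ j ∈ range L, f (k * L + j)) (∑ j ∈ range L, a j) :=
    hasMean_sum _ fun j hj => h j (mem_range.1 hj)
  refine (tendsto_inv_smul_iff_hasMean (C := L * C) (f := f)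
    (S := fun n => ∑ k ∈ range (n / L), ∑ j ∈ range L, f (k * L + j)) fun n => ?_).1 ?_
  · rw [← sum_range_mul]
    refine (norm_sum_range_sub_sum_range_le hf _ _).trans ?_
    gcongr
    have hn : (n : ℝ) = (n / L * L : ℕ) + (n % L : ℕ) := by
      exact_mod_cast (Nat.div_add_mod' n L).symm
    rw [hn, sub_add_cancel_left, abs_neg, Nat.abs_cast]
    exact_mod_cast (Nat.mod_lt n (Nat.pos_of_ne_zero hL)).le
  · refine ((tendsto_natCast_div_div_atTop L).smul
      (hblock.comp (Nat.tendsto_div_const_atTop hL))).congr' ?_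
    filter_upwards [(Nat.tendsto_div_const_atTop hL).eventually_ne_atTop 0] with n hn
    rw [Function.comp_apply, smul_smul, div_mul_eq_mul_div,
      mul_inv_cancel₀ (by exact_mod_cast hn), one_div]

lemma hasMean_comp_mod {L : ℕ} (hL : L ≠ 0) (c : ℕ → E) :
    HasMean (fun i => c (i % L)) ((L : ℝ)⁻¹ • ∑ j ∈ range L, c j) := by
  refine hasMean_of_hasMean_residue (C := ∑ j ∈ range L, ‖c j‖) hL (fun i => ?_) fun j hj => ?_
  · exact single_le_sum (f := fun j => ‖c j‖) (fun _ _ => norm_nonneg _)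
      (mem_range.2 (Nat.mod_lt i (Nat.pos_of_ne_zero hL)))
  · simpa only [Nat.mul_add_mod', Nat.mod_eq_of_lt hj] using hasMean_const (c j)

lemma hasMean_ite_mod_lt {m L : ℕ} (hL : L ≠ 0) (hf : ∀ i, ‖f i‖ ≤ C)
    (h : ∀ j < m, HasMean (fun k => f (k * L + j)) a) :
    HasMean (fun i => if i % L < m then f i else a) a := by
  have hC : 0 ≤ C := (norm_nonneg _).trans (hf 0)
  have hbound : ∀ i, ‖if i % L < m then f i else a‖ ≤ C + ‖a‖ := fun i => by
    split_ifs
    · exact (hf i).trans (le_add_of_nonneg_right (norm_nonneg a))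
    · exact le_add_of_nonneg_left hC
  have hres : ∀ j < L,
      HasMean (fun k => if (k * L + j) % L < m then f (k * L + j) else a) a := fun j hj => by
    by_cases hjm : j < m
    · simpa [Nat.mod_eq_of_lt hj, hjm] using h j hjm
    · simpa [Nat.mod_eq_of_lt hj, hjm] using hasMean_const a
  simpa [← Nat.cast_smul_eq_nsmul ℝ, smul_smul, hL] using hasMean_of_hasMean_residue hL hbound hres

lemma hasMean_of_hasMean_residue_of_add_le (hf : ∀ i, ‖f i‖ ≤ C) (ℓ : ℕ)
    (h : ∀ L j, j + ℓ ≤ L → HasMean (fun k => f (k * L + j)) a) : HasMean f a := by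
  refine hasMean_of_forall_exists_norm_sum_sub_le fun ε hε => ?_
  set K : ℝ := C + ‖a‖
  -- The last `ℓ` residues modulo `m + ℓ` are given up: their proportion is arbitrarily small.
  obtain ⟨m, hmε, hm⟩ : ∃ m : ℕ, ℓ * K / (m + ℓ : ℕ) < ε ∧ m ≠ 0 :=
    ((((tendsto_const_div_atTop_nhds_zero_nat (ℓ * K)).comp (tendsto_add_atTop_nat ℓ)
      ).eventually_lt_const hε).and (eventually_ne_atTop 0)).exists
  have hL : m + ℓ ≠ 0 := by omega
  have hexc : HasMean (fun i => if i % (m + ℓ) < m then 0 else K) (ℓ * K / (m + ℓ : ℕ)) := by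
    have hsum : ∑ j ∈ range (m + ℓ), (if j < m then 0 else K) = ℓ * K := by
      rw [sum_range_add, sum_eq_zero fun j hj => if_pos (mem_range.1 hj)]
      simp
    rw [div_eq_inv_mul, ← hsum]
    exact hasMean_comp_mod hL fun j => if j < m then 0 else K
  refine ⟨_, hasMean_ite_mod_lt hL hf fun j (hj : j < m) => h (m + ℓ) j (by omega),
    (hexc.eventually_sum_le hmε).mono fun n hn => (norm_sum_le_of_le _ fun i _ => ?_).trans hn⟩
  split_ifs
  · simp
  · exact (norm_sub_le _ _).trans (add_le_add_left (hf i) _)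

/-- The average of the `H` terms of `f` at `i, i + ℓ, …, i + (H - 1) * ℓ`. -/
noncomputable def stepAverage (f : ℕ → E) (ℓ H i : ℕ) : E :=
  (H : ℝ)⁻¹ • ∑ t ∈ range H, f (i + t * ℓ)

lemma hasMean_sub_stepAverage {H : ℕ} (hf : ∀ i, ‖f i‖ ≤ C) (ℓ : ℕ) (hH : H ≠ 0) :
    HasMean (fun k => f (k * ℓ) - stepAverage f ℓ H (k * ℓ)) 0 := by
  have hmean : HasMean (fun k => (H : ℝ)⁻¹ • ∑ t ∈ range H, (f (k * ℓ) - f ((k + t) * ℓ))) 0 := by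
    simpa using (hasMean_sum (range H) fun t _ =>
      hasMean_sub_shift (f := fun k => f (k * ℓ)) (fun _ => hf _) t).const_smul (H : ℝ)⁻¹
  convert hmean using 2 with k
  have hH' : (H : ℝ) ≠ 0 := by exact_mod_cast hH
  simp only [stepAverage, sum_sub_distrib, sum_const, card_range, smul_sub,
    ← Nat.cast_smul_eq_nsmul ℝ, inv_smul_smul₀ hH', add_mul]

end CesaroMean

section VanDerCorput

variable {E : Type*} [SeminormedAddCommGroup E] [InnerProductSpace ℝ E] {f : ℕ → E}
  {C ε : ℝ} {ℓ H : ℕ}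

lemma norm_stepAverage_sq (f : ℕ → E) (ℓ H i : ℕ) :
    ‖stepAverage f ℓ H i‖ ^ 2 =
      ((H : ℝ) ^ 2)⁻¹ * ∑ s ∈ range H, ∑ t ∈ range H, ⟪f (i + s * ℓ), f (i + t * ℓ)⟫_ℝ := by
  rw [stepAverage, norm_smul, mul_pow, norm_inv, Real.norm_natCast, inv_pow,
    ← real_inner_self_eq_norm_sq, sum_inner]
  simp only [inner_sum]

lemma hasMean_inner_shift_shift (hf : ∀ i, ‖f i‖ ≤ C)
    (h : ∀ t ≠ 0, HasMean (fun i => ⟪f i, f (i + t * ℓ)⟫_ℝ) 0) {s t : ℕ} (hst : s ≠ t) :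
    HasMean (fun i => ⟪f (i + s * ℓ), f (i + t * ℓ)⟫_ℝ) 0 := by
  have hbound : ∀ i j, ‖⟪f i, f j⟫_ℝ‖ ≤ C * C := fun i j =>
    (norm_inner_le_norm _ _).trans
      (mul_le_mul (hf i) (hf j) (norm_nonneg _) ((norm_nonneg _).trans (hf i)))
  wlog hlt : s < t generalizing s t
  · simpa only [real_inner_comm] using this hst.symm (by omega)
  obtain ⟨d, rfl⟩ := Nat.exists_eq_add_of_lt hlt
  simpa only [add_assoc, ← add_mul] using (h (d + 1) (by omega)).shift (fun i => hbound i _) (s * ℓ)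

lemma eventually_sum_norm_stepAverage_sq_le (hf : ∀ i, ‖f i‖ ≤ C)
    (h : ∀ t ≠ 0, HasMean (fun i => ⟪f i, f (i + t * ℓ)⟫_ℝ) 0) (hH : C ^ 2 / H < ε) :
    ∀ᶠ n : ℕ in atTop, ∑ i ∈ range n, ‖stepAverage f ℓ H i‖ ^ 2 ≤ ε * n := by
  let r : ℕ → ℝ := fun i => ((H : ℝ) ^ 2)⁻¹ * ∑ s ∈ range H, ∑ t ∈ range H,
    if s = t then C ^ 2 else ⟪f (i + s * ℓ), f (i + t * ℓ)⟫_ℝ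
  have hr : HasMean r (C ^ 2 / H) := by
    have hsum : C ^ 2 / H =
        ((H : ℝ) ^ 2)⁻¹ * ∑ s ∈ range H, ∑ t ∈ range H, if s = t then C ^ 2 else 0 := by
      simp only [sum_ite_eq, sum_ite_mem, inter_self, sum_const, card_range, nsmul_eq_mul]
      field_simp
    rw [hsum]
    refine (hasMean_sum _ fun s _ => hasMean_sum _ fun t _ => ?_).const_smul _
    split_ifs with hst
    · exact hasMean_const _
    · exact hasMean_inner_shift_shift hf h hst
  have hle : ∀ i, ‖stepAverage f ℓ H i‖ ^ 2 ≤ r i := fun i => by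
    rw [norm_stepAverage_sq]
    dsimp only [r]
    gcongr with s _ t _
    split_ifs with hst
    · rw [hst, real_inner_self_eq_norm_sq]
      gcongr
      exact hf _
    · rfl
  exact (hr.eventually_sum_le hH).mono fun n hn => (sum_le_sum fun i _ => hle i).trans hn

theorem hasMean_comp_mul_of_hasMean_inner (hf : ∀ i, ‖f i‖ ≤ C) (hℓ : ℓ ≠ 0)
    (h : ∀ t ≠ 0, HasMean (fun i => ⟪f i, f (i + t * ℓ)⟫_ℝ) 0) :
    HasMean (fun k => f (k * ℓ)) 0 := by
  refine hasMean_of_forall_exists_norm_sum_sub_le fun ε hε => ?_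
  have hδ : 0 < ε ^ 2 / ℓ := by positivity
  obtain ⟨H, hHε, hH⟩ := (((tendsto_const_div_atTop_nhds_zero_nat (C ^ 2)).eventually_lt_const
    hδ).and (eventually_ne_atTop 0)).exists
  refine ⟨_, hasMean_sub_stepAverage hf ℓ hH, ?_⟩
  simp only [sub_sub_cancel]
  exact eventually_norm_sum_mul_le hℓ hε.le (by rw [div_mul_cancel₀]; positivity)
    (eventually_sum_norm_stepAverage_sq_le hf h hHε)

end VanDerCorput

section Equidistribution

variable {β γ : Type*} [Fintype β] [DecidableEq β] [Fintype γ] [DecidableEq γ] {y : ℕ → β}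

/-- The sequence `y` in a finite type takes every value with the same limiting frequency. -/
def Equidistributed (y : ℕ → β) : Prop :=
  ∀ c, HasMean (fun i => if y i = c then (1 : ℝ) else 0) (Fintype.card β : ℝ)⁻¹

lemma Equidistributed.hasMean_comp (hy : Equidistributed y) (F : β → ℝ) :
    HasMean (fun i => F (y i)) (𝔼 c, F c) := by
  rw [Fintype.expect_eq_sum_div_card, div_eq_inv_mul, mul_comm, sum_mul]
  simpa using hasMean_sum univ fun c _ => (hy c).const_smul (F c)

lemma equidistributed_iff_forall_expect_eq_zero :
    Equidistributed y ↔ ∀ F : β → ℝ, 𝔼 c, F c = 0 → HasMean (fun i => F (y i)) 0 := by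
  refine ⟨fun hy F hF => hF ▸ hy.hasMean_comp F, fun h c => hasMean_sub_const_iff.1 ?_⟩
  have : Nonempty β := ⟨c⟩
  refine h (fun c' => (if c' = c then (1 : ℝ) else 0) - (Fintype.card β : ℝ)⁻¹) ?_
  simp [expect_sub_distrib]

lemma equidistributed_equiv_comp_iff (e : β ≃ γ) :
    Equidistributed (fun i => e (y i)) ↔ Equidistributed y := by
  simp only [Equidistributed, e.surjective.forall, e.injective.eq_iff, Fintype.card_congr e]

end Equidistribution

section Coordinates

variable {ι ι₁ ι₂ κ α : Type*} [Fintype ι] [DecidableEq ι] [Fintype κ] [DecidableEq κ]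
  [Fintype ι₁] [DecidableEq ι₁] [Fintype ι₂] [DecidableEq ι₂] [Fintype α]

lemma expect_comp_injective [Nonempty α] {e : ι → κ} (he : e.Injective) (F : (ι → α) → ℝ) :
    𝔼 w : κ → α, F (w ∘ e) = 𝔼 v, F v := by
  classical
  let σ : ι ⊕ ↥(Set.range e)ᶜ ≃ κ :=
    ((Equiv.ofInjective e he).sumCongr (Equiv.refl _)).trans (Equiv.Set.sumCompl (Set.range e))
  calc 𝔼 w : κ → α, F (w ∘ e)
      = 𝔼 p : (ι → α) × (↥(Set.range e)ᶜ → α), F p.1 :=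
        Fintype.expect_equiv ((σ.arrowCongr (Equiv.refl α)).symm.trans
          (Equiv.sumArrowEquivProdArrow _ _ α)) _ _ fun _ => rfl
    _ = 𝔼 v, F v := by
        rw [← univ_product_univ, expect_product]
        simp only [Fintype.expect_const]

lemma expect_mul_comp_of_injective [Nonempty α] {e₁ : ι₁ → κ} {e₂ : ι₂ → κ}
    (he : (Sum.elim e₁ e₂).Injective) (F : (ι₁ → α) → ℝ) (G : (ι₂ → α) → ℝ) :
    𝔼 w : κ → α, F (w ∘ e₁) * G (w ∘ e₂) = (𝔼 v, F v) * 𝔼 v, G v := by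
  have h := expect_comp_injective he fun v : ι₁ ⊕ ι₂ → α => F (v ∘ Sum.inl) * G (v ∘ Sum.inr)
  simp only [Function.comp_assoc, Sum.elim_comp_inl, Sum.elim_comp_inr] at h
  rw [h, Fintype.expect_mul_expect, ← expect_product', univ_product_univ]
  exact Fintype.expect_equiv (Equiv.sumArrowEquivProdArrow ι₁ ι₂ α) _ _ fun _ => rfl

end Coordinates

section Window

variable {α : Type*} {x : ℕ → α} {ℓ : ℕ}

/-- The block of `ℓ` consecutive terms of the sequence `x` starting at position `i`. -/
def window (x : ℕ → α) (ℓ i : ℕ) : Fin ℓ → α := fun j => x (i + j)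

lemma window_comp (x : ℕ → α) (L i m : ℕ) (e : Fin ℓ → Fin L) (he : ∀ j, (e j : ℕ) = m + j) :
    window x L i ∘ e = window x ℓ (i + m) := by
  ext j
  simp [window, he, add_assoc]

variable [Fintype α] [DecidableEq α]

lemma equidistributed_window_of_forall_window_mul
    (h : ∀ L, 1 ≤ L → Equidistributed fun k => window x L (k * L)) (hℓ : 1 ≤ ℓ) :
    Equidistributed (window x ℓ) := by
  intro c
  have : Nonempty α := ⟨x 0⟩
  let F : (Fin ℓ → α) → ℝ := fun v => if v = c then 1 else 0
  have hF : 𝔼 v, F v = (Fintype.card (Fin ℓ → α) : ℝ)⁻¹ := by simp [F]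
  refine hasMean_of_hasMean_residue_of_add_le (C := 1) (fun i => by split_ifs <;> simp) ℓ
    fun L j hj => ?_
  let e : Fin ℓ → Fin L := fun i => ⟨j + i, by omega⟩
  have he : e.Injective := fun i i' hi => by simpa [e, Fin.ext_iff] using hi
  have hmean := (h L (by omega)).hasMean_comp fun w => F (w ∘ e)
  rw [expect_comp_injective he, hF] at hmean
  simpa only [window_comp x L _ j e fun _ => rfl] using hmean

lemma hasMean_window_mul_window (h : ∀ L, 1 ≤ L → Equidistributed (window x L))
    (hℓ : 1 ≤ ℓ) {t : ℕ} (ht : t ≠ 0) (F : (Fin ℓ → α) → ℝ) :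
    HasMean (fun i => F (window x ℓ i) * F (window x ℓ (i + t * ℓ))) ((𝔼 v, F v) * 𝔼 v, F v) := by
  have : Nonempty α := ⟨x 0⟩
  have hle : ℓ ≤ t * ℓ := Nat.le_mul_of_pos_left ℓ (Nat.pos_of_ne_zero ht)
  let e₁ : Fin ℓ → Fin (t * ℓ + ℓ) := fun j => ⟨0 + j, by omega⟩
  let e₂ : Fin ℓ → Fin (t * ℓ + ℓ) := fun j => ⟨t * ℓ + j, by omega⟩
  have he : (Sum.elim e₁ e₂).Injective := by
    refine Function.Injective.sumElim (fun i j hij => ?_) (fun i j hij => ?_) fun i j => ?_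
    all_goals
      simp only [e₁, e₂, Fin.ext_iff, ne_eq] at *
      omega
  have hmean := (h (t * ℓ + ℓ) (by omega)).hasMean_comp fun w => F (w ∘ e₁) * F (w ∘ e₂)
  rw [expect_mul_comp_of_injective he] at hmean
  simpa only [window_comp x _ _ 0 e₁ fun _ => rfl, window_comp x _ _ (t * ℓ) e₂ fun _ => rfl,
    add_zero] using hmean

lemma equidistributed_window_mul_of_forall_window (h : ∀ L, 1 ≤ L → Equidistributed (window x L))
    (hℓ : 1 ≤ ℓ) :
    Equidistributed fun k => window x ℓ (k * ℓ) := by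
  refine equidistributed_iff_forall_expect_eq_zero.2 fun F hF => hasMean_comp_mul_of_hasMean_inner
    (f := fun i => F (window x ℓ i)) (C := ∑ v, ‖F v‖)
    (fun i => single_le_sum (f := fun v => ‖F v‖) (fun _ _ => norm_nonneg _) (mem_univ _))
    (by omega) fun t ht => ?_
  simpa [hF, mul_comm] using hasMean_window_mul_window h hℓ ht F

theorem equidistributed_window_mul_iff (x : ℕ → α) :
    (∀ ℓ, 1 ≤ ℓ → Equidistributed fun k => window x ℓ (k * ℓ)) ↔
      ∀ ℓ, 1 ≤ ℓ → Equidistributed (window x ℓ) :=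
  ⟨fun h _ => equidistributed_window_of_forall_window_mul h,
    fun h _ => equidistributed_window_mul_of_forall_window h⟩

end Window

section Digits

variable {b : ℕ}

lemma count_rdigits (b : ℕ) (R : ℝ) (n d : ℕ) :
    ((rdigits b R n).count d : ℝ) = ∑ i ∈ range n, if rdigit b R i = d then 1 else 0 := by
  induction n with
  | zero => simp [rdigits]
  | succ n ih =>
    rw [sum_range_succ, ← ih, rdigits, List.range_succ, List.map_append, List.count_append]
    simp [rdigits, List.count_singleton]

lemma length_rdigits (b : ℕ) (R : ℝ) (n : ℕ) : (rdigits b R n).length = n := by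
  simp [rdigits]

lemma floor_mul_pow_add_div_pow (hb : b ≠ 0) (R : ℝ) (i s : ℕ) :
    ⌊R * (b : ℝ) ^ (i + s)⌋₊ / b ^ s = ⌊R * (b : ℝ) ^ i⌋₊ := by
  rw [← Nat.floor_div_natCast, Nat.cast_pow, pow_add, ← mul_assoc, mul_div_cancel_right₀]
  exact pow_ne_zero s (Nat.cast_ne_zero.2 hb)

lemma rdigit_pow_div_pow_mod (hb : b ≠ 0) (R : ℝ) (k j s : ℕ) :
    rdigit (b ^ (j + 1 + s)) R k / b ^ s % b = rdigit b R (k * (j + 1 + s) + j) := by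
  simp only [rdigit, Int.floor_toNat, Nat.cast_pow, ← pow_mul]
  rw [add_comm (j + 1) s, pow_add b s, Nat.mod_mul_right_div_self, pow_succ b j,
    Nat.mod_mul_left_mod, show (s + (j + 1)) * (k + 1) = k * (s + (j + 1)) + j + 1 + s by ring,
    floor_mul_pow_add_div_pow hb]

lemma coe_digits (b : ℕ) [NeZero b] (R : ℝ) (i : ℕ) : (Real.digits R b i : ℕ) = rdigit b R i := by
  simp [rdigit, Real.digits, Int.floor_toNat]

lemma simplyNormal_iff_equidistributed (b : ℕ) [NeZero b] (R : ℝ) :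
    SimplyNormal b R ↔ Equidistributed (Real.digits R b) := by
  simp only [SimplyNormal, Equidistributed, HasMean, Fin.ext_iff, coe_digits, count_rdigits,
    Fintype.card_fin, smul_eq_mul, div_eq_inv_mul, mul_one]
  exact (Fin.forall_iff (p := fun d : Fin b => Tendsto (fun n : ℕ =>
    (n : ℝ)⁻¹ * ∑ i ∈ range n, if rdigit b R i = d then 1 else 0) atTop (𝓝 (b : ℝ)⁻¹))).symm

/-- The base-`b` digits of a number below `b ^ ℓ`, most significant digit first. -/
def bigEndianDigits (b ℓ : ℕ) : Fin (b ^ ℓ) ≃ (Fin ℓ → Fin b) :=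
  finFunctionFinEquiv.symm.trans (Fin.revPerm.arrowCongr (Equiv.refl _))

lemma bigEndianDigits_digits (b : ℕ) [NeZero b] (R : ℝ) (ℓ k : ℕ) :
    bigEndianDigits b ℓ (Real.digits R (b ^ ℓ) k) = window (Real.digits R b) ℓ (k * ℓ) := by
  ext j
  obtain ⟨s, hs⟩ := Nat.exists_eq_add_of_le (Nat.succ_le_of_lt j.isLt)
  obtain ⟨j, hj⟩ := j
  change (Real.digits R (b ^ ℓ) k : ℕ) / b ^ (ℓ - (j + 1)) % b = Real.digits R b (k * ℓ + j)
  obtain rfl : ℓ = j + 1 + s := hs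
  rw [coe_digits, coe_digits, Nat.add_sub_cancel_left, rdigit_pow_div_pow_mod (NeZero.ne b)]

lemma normalBase_iff_equidistributed_window_mul (b : ℕ) [NeZero b] (R : ℝ) :
    NormalBase b R ↔
      ∀ ℓ, 1 ≤ ℓ → Equidistributed fun k => window (Real.digits R b) ℓ (k * ℓ) := by
  simp only [NormalBase, simplyNormal_iff_equidistributed, ← bigEndianDigits_digits,
    equidistributed_equiv_comp_iff]

end Digits

section Discrepancy

variable {b ℓ : ℕ}

lemma setOf_length_eq_and_forall_lt (ℓ b : ℕ) :
    {v : List ℕ | v.length = ℓ ∧ ∀ d ∈ v, d < b} =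
      Set.range fun w : Fin ℓ → Fin b => List.ofFn fun j => (w j : ℕ) := by
  ext v
  constructor
  · rintro ⟨rfl, hv⟩
    exact ⟨fun j => ⟨v[j], hv _ (List.getElem_mem _)⟩, List.ofFn_getElem⟩
  · rintro ⟨w, rfl⟩
    simp [List.mem_ofFn]

lemma blockDisc_eq_norm (ℓ b : ℕ) (u : List ℕ) :
    blockDisc ℓ b u = ‖fun w : Fin ℓ → Fin b =>
      (occBlock u (List.ofFn fun j => (w j : ℕ)) : ℝ) / u.length - 1 / (b : ℝ) ^ ℓ‖ := by
  rw [blockDisc, setOf_length_eq_and_forall_lt, ← Set.range_comp]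
  refine le_antisymm (Real.sSup_le ?_ (norm_nonneg _))
    ((pi_norm_le_iff_of_nonneg (Real.sSup_nonneg ?_)).2 fun w =>
      le_csSup (Set.finite_range _).bddAbove (Set.mem_range_self w))
  · rintro _ ⟨w, rfl⟩
    exact norm_le_pi_norm (fun w : Fin ℓ → Fin b =>
      (occBlock u (List.ofFn fun j => (w j : ℕ)) : ℝ) / u.length - 1 / (b : ℝ) ^ ℓ) w
  · rintro _ ⟨w, rfl⟩
    exact abs_nonneg _

lemma tendsto_blockDisc_zero_iff {u : ℕ → List ℕ} :
    Tendsto (fun n => blockDisc ℓ b (u n)) atTop (𝓝 0) ↔ ∀ w : Fin ℓ → Fin b,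
      Tendsto (fun n => (occBlock (u n) (List.ofFn fun j => (w j : ℕ)) : ℝ) / (u n).length) atTop
        (𝓝 (1 / (b : ℝ) ^ ℓ)) := by
  simp only [blockDisc_eq_norm, ← tendsto_zero_iff_norm_tendsto_zero, tendsto_pi_nhds,
    Pi.zero_apply, tendsto_sub_nhds_zero_iff]

lemma take_drop_rdigits (b : ℕ) (R : ℝ) {n i : ℕ} (h : i + ℓ ≤ n) :
    ((rdigits b R n).drop i).take ℓ = List.ofFn fun j : Fin ℓ => rdigit b R (i + j) := by
  refine List.ext_getElem ?_ fun j _ _ => ?_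
  · simp only [List.length_take, List.length_drop, length_rdigits, List.length_ofFn]
    omega
  · simp [rdigits]

lemma occBlock_rdigits [NeZero b] (R : ℝ) (w : Fin ℓ → Fin b) (n : ℕ) :
    (occBlock (rdigits b R n) (List.ofFn fun j => (w j : ℕ)) : ℝ) =
      ∑ i ∈ range (n + 1 - ℓ), if window (Real.digits R b) ℓ i = w then 1 else 0 := by
  rw [occBlock, Finset.card_filter, Nat.cast_sum]
  simp only [List.length_ofFn, length_rdigits]
  refine sum_congr rfl fun i hi => ?_
  rw [take_drop_rdigits b R (by have := mem_range.1 hi; omega)]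
  simp [funext_iff, Fin.ext_iff, window, coe_digits]

lemma tendsto_blockDisc_rdigits_zero_iff [NeZero b] (R : ℝ) :
    Tendsto (fun n => blockDisc ℓ b (rdigits b R n)) atTop (𝓝 0) ↔
      Equidistributed (window (Real.digits R b) ℓ) := by
  rw [tendsto_blockDisc_zero_iff]
  refine forall_congr' fun w => ?_
  have hbound : ∀ i, ‖if window (Real.digits R b) ℓ i = w then (1 : ℝ) else 0‖ ≤ 1 := fun i => by
    split_ifs <;> simp
  have hclose : ∀ n : ℕ, |((n + 1 - ℓ : ℕ) : ℝ) - n| * 1 ≤ ℓ + 1 := fun n => by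
    have hlo : n ≤ n + 1 - ℓ + ℓ := by omega
    have hhi : n + 1 - ℓ ≤ n + (ℓ + 1) := by omega
    generalize n + 1 - ℓ = m at *
    rify at hlo hhi
    rw [mul_one, abs_le]
    constructor <;> linarith
  rw [← tendsto_inv_smul_iff_hasMean fun n =>
    (norm_sum_range_sub_sum_range_le hbound (n + 1 - ℓ) n).trans (hclose n)]
  simp only [occBlock_rdigits, length_rdigits, div_eq_inv_mul, smul_eq_mul, mul_one,
    Fintype.card_pi_const, Fintype.card_fin, Nat.cast_pow]

end Discrepancy

/-- A real `R ∈ [0,1)` is normal to base `b` if and only if for every `ℓ ≥ 1` the block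
discrepancy of the first `n` digits of `(R)_b` to blocks of length `ℓ` tends to `0`. -/
theorem normal_iff_blockDisc_tendsto_zero
    (b : ℕ) (hb : 2 ≤ b) (R : ℝ) (hR : R ∈ Set.Ico (0 : ℝ) 1) :
    NormalBase b R ↔
      ∀ ℓ : ℕ, 1 ≤ ℓ →
        Tendsto (fun n => blockDisc ℓ b (rdigits b R n)) atTop (nhds 0) := by
  have : NeZero b := ⟨by omega⟩
  calc NormalBase b R
      ↔ ∀ ℓ, 1 ≤ ℓ → Equidistributed fun k => window (Real.digits R b) ℓ (k * ℓ) :=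
        normalBase_iff_equidistributed_window_mul b R
    _ ↔ ∀ ℓ, 1 ≤ ℓ → Equidistributed (window (Real.digits R b) ℓ) :=
        equidistributed_window_mul_iff _
    _ ↔ ∀ ℓ, 1 ≤ ℓ → Tendsto (fun n => blockDisc ℓ b (rdigits b R n)) atTop (𝓝 0) := by
        simp only [tendsto_blockDisc_rdigits_zero_iff]
end

section
/- Let i ≥ 1, let δ_i = 1/(2^{2i−2}·((i+1)!)²), and let k_i be the least integer greater than max(⌈6(i+2)⌉, −ln(δ_i/(2(i+1)²))·6(i+2)²). Let I⃗ = (I_2, …, I_{i+1}) be an (i+1)-sequence, let L be a dyadic subinterval of I_{i+1} with μ(L) ≥ μ(I_{i+1})/4, and partition L into 2^{k_i·⌈log₂(i+1)⌉} dyadic subintervals of equal measure. Then there is at least one subinterval J_2 of this partition and an (i+1)-sequence J⃗ = (J_2, …, J_{i+1}) such that for every base b with 2 ≤ b ≤ i+1, x_b(I⃗) is a proper prefix of x_b(J⃗) and the block u_b defined by x_b(I⃗)·u_b = x_b(J⃗) satisfies D(u_b, b) ≤ 1/(i+2). -/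
open MeasureTheory
open scoped ENNReal

/-- The simple discrepancy `D(u, b)` of a block `u` of digits in base `b`: the maximum
over all digits `d < b` of `|occ(u,d)/|u| − 1/b|`. -/
noncomputable def simpleDisc (b : ℕ) (u : List ℕ) : ℝ :=
  sSup ((fun d => |(u.count d : ℝ) / u.length - 1 / (b : ℝ)|) '' {d : ℕ | d < b})

/-- `xblock b m a` is the block of length `m` of base-`b` digits of `a` (most
significant digit first, padded with leading zeros); for `a < b^m` this is the base-`b`
expansion of the left endpoint of the `b`-adic interval `[a/b^m, (a+1)/b^m)`. -/
def xblock (b m a : ℕ) : List ℕ :=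
  (List.range m).map fun j => a / b ^ (m - 1 - j) % b

/-!
Split `L` into `2 ^ K` equal dyadic intervals and, starting from each of them, choose in every
base an interval of the largest length at most half the previous one, so that it fits. In base `b`
the resulting sequences append pairwise distinct blocks to `x_b(I)`, all of the same length `l`.
Since each step of a `t`-sequence loses at most a factor `2 (b + 1)` of measure, there are at most
`(2 ^ (t - 2) * t!) ^ 2 * 2 ^ K` blocks of length `l`, so the new blocks form a proportion of all
blocks that is bounded below independently of `K`. By Hoeffding's inequality the proportion of
blocks whose discrepancy exceeds `ε` decays like `exp (-2 l ε ^ 2)`, hence for large `K` a union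
bound over the bases leaves a good sequence.
-/

open Finset ProbabilityTheory
open scoped Nat

section Blocks

variable (b m l w : ℕ)

theorem length_xblock : (xblock b l w).length = l := by
  simp [xblock]

theorem xblock_succ : xblock b (l + 1) w = xblock b l (w / b) ++ [w % b] := by
  unfold xblock
  rw [List.range_succ, List.map_append]
  congr 1
  · refine List.map_congr_left fun j hj ↦ ?_
    have hexp : l + 1 - 1 - j = l - 1 - j + 1 := by grind
    rw [hexp, pow_succ', Nat.div_div_eq_div_mul]
  · simp

theorem xblock_append : xblock b m (w / b ^ l) ++ xblock b l w = xblock b (m + l) w := by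
  induction l generalizing w with
  | zero => simp [xblock]
  | succ l ih =>
    rw [xblock_succ, ← add_assoc, xblock_succ, ← ih, pow_succ', Nat.div_div_eq_div_mul,
      List.append_assoc]

theorem xblock_mod_pow : xblock b l (w % b ^ l) = xblock b l w := by
  induction l generalizing w with
  | zero => simp [xblock]
  | succ l ih =>
    rw [xblock_succ, xblock_succ, pow_succ', Nat.mod_mul_right_div_self, ih,
      Nat.mod_mod_of_dvd _ (dvd_mul_right b _)]

end Blocks

theorem simpleDisc_le {b : ℕ} {u : List ℕ} {ε : ℝ} (hε : 0 ≤ ε)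
    (h : ∀ d < b, |(u.count d : ℝ) / u.length - 1 / b| ≤ ε) : simpleDisc b u ≤ ε :=
  Real.sSup_le (Set.forall_mem_image.mpr h) hε

theorem sum_range_mul_eq_sum_sum {M : Type*} [AddCommMonoid M] (f : ℕ → M) (m n : ℕ) :
    ∑ w ∈ range (m * n), f w = ∑ v ∈ range m, ∑ e ∈ range n, f (e + n * v) := by
  induction m with
  | zero => simp
  | succ m ih =>
    rw [Nat.succ_mul, sum_range_add, ih, sum_range_succ]
    simp only [add_comm, mul_comm]

theorem sum_pow_count_xblock {R : Type*} [CommRing R] {b d : ℕ} (hd : d < b) (z : R) (l : ℕ) :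
    ∑ w ∈ range (b ^ l), z ^ (xblock b l w).count d = (b - 1 + z) ^ l := by
  induction l with
  | zero => simp [xblock]
  | succ l ih =>
    have last_digit (v e : ℕ) (he : e ∈ range b) :
        z ^ (xblock b (l + 1) (e + b * v)).count d =
          z ^ (xblock b l v).count d * (1 + if e = d then z - 1 else 0) := by
      have heb : e < b := mem_range.mp he
      rw [xblock_succ, Nat.add_mul_div_left _ _ (by lia), Nat.div_eq_of_lt heb, zero_add,
        Nat.add_mul_mod_self_left, Nat.mod_eq_of_lt heb, List.count_append, pow_add]
      by_cases h : e = d <;> simp [h]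
    have sum_last_digit : ∑ e ∈ range b, (1 + if e = d then z - 1 else 0) = b - 1 + z := by
      simp only [sum_add_distrib, sum_const, card_range, nsmul_one, sum_ite_eq', mem_range, hd,
        if_true]
      ring
    rw [pow_succ b, sum_range_mul_eq_sum_sum, pow_succ _ l, ← ih, sum_mul]
    refine sum_congr rfl fun v _ ↦ ?_
    rw [sum_congr rfl (last_digit v), ← mul_sum, sum_last_digit]

theorem one_sub_add_mul_exp_le (p : unitInterval) (t : ℝ) :
    1 - p + p * Real.exp t ≤ Real.exp (p * t + t ^ 2 / 8) := by
  let μ := bernoulliMeasure (1 : ℝ) 0 p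
  have mean : ∫ x, x ∂μ = p := by
    rw [integral_bernoulliMeasure]
    simp
  have mem_Icc : ∀ᵐ x ∂μ, id x ∈ Set.Icc (0 : ℝ) 1 := by
    rw [show μ = _ from bernoulliMeasure_def 1 0 p, ae_add_measure_iff]
    exact ⟨Measure.ae_smul_measure (by simp) _, Measure.ae_smul_measure (by simp) _⟩
  have hoeffding := (hasSubgaussianMGF_of_mem_Icc aemeasurable_id mem_Icc).mgf_le t
  have variance_proxy : (((‖(1 : ℝ) - 0‖₊ / 2) ^ 2 : NNReal) : ℝ) * t ^ 2 / 2 = t ^ 2 / 8 := by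
    simp
    ring
  simp only [id, mean, mgf, integral_bernoulliMeasure, μ, smul_eq_mul, variance_proxy]
    at hoeffding
  calc 1 - p + p * Real.exp t
      = Real.exp (p * t) * (p * Real.exp (t * (1 - p)) + (1 - p) * Real.exp (t * (0 - p))) := by
        have h₁ : Real.exp t = Real.exp (p * t) * Real.exp (t * (1 - p)) := by
          rw [← Real.exp_add]
          ring_nf
        have h₀ : Real.exp (p * t) * Real.exp (t * (0 - p)) = 1 := by
          rw [← Real.exp_add, zero_sub, mul_neg, mul_comm, add_neg_cancel, Real.exp_zero]
        rw [h₁]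
        linear_combination (p - 1 : ℝ) * h₀
    _ ≤ Real.exp (p * t) * Real.exp (t ^ 2 / 8) := by gcongr
    _ = Real.exp (p * t + t ^ 2 / 8) := (Real.exp_add _ _).symm

theorem card_filter_le_mul_count {b d : ℕ} (hd : d < b) (l : ℕ) (t s : ℝ) :
    (#{w ∈ range (b ^ l) | s ≤ t * (xblock b l w).count d} : ℝ) ≤
      b ^ l * Real.exp (l * (t / b + t ^ 2 / 8) - s) := by
  have hb : (1 : ℝ) ≤ b := mod_cast Nat.one_le_of_lt hd
  have markov : #{w ∈ range (b ^ l) | s ≤ t * (xblock b l w).count d} * Real.exp s ≤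
      ∑ w ∈ range (b ^ l), Real.exp t ^ (xblock b l w).count d := by
    rw [← nsmul_eq_mul]
    refine (card_nsmul_le_sum _ _ _ fun w hw ↦ ?_).trans
      (sum_le_sum_of_subset_of_nonneg (filter_subset _ _) fun _ _ _ ↦ by positivity)
    rw [← Real.exp_nat_mul, mul_comm]
    exact Real.exp_le_exp.mpr (mem_filter.mp hw).2
  have digit_mgf : (b : ℝ) - 1 + Real.exp t ≤ b * Real.exp (t / b + t ^ 2 / 8) := by
    have h := one_sub_add_mul_exp_le ⟨1 / b, by positivity, div_le_one_of_le₀ hb (by positivity)⟩ t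
    calc (b : ℝ) - 1 + Real.exp t = b * (1 - 1 / b + 1 / b * Real.exp t) := by field_simp
      _ ≤ b * Real.exp (1 / b * t + t ^ 2 / 8) := by gcongr
      _ = b * Real.exp (t / b + t ^ 2 / 8) := by rw [one_div_mul_eq_div]
  rw [Real.exp_sub, ← mul_div_assoc, le_div_iff₀ (Real.exp_pos s)]
  calc #{w ∈ range (b ^ l) | s ≤ t * (xblock b l w).count d} * Real.exp s
      ≤ ((b : ℝ) - 1 + Real.exp t) ^ l := markov.trans_eq (sum_pow_count_xblock hd _ l)
    _ ≤ (b * Real.exp (t / b + t ^ 2 / 8)) ^ l :=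
        pow_le_pow_left₀ (by linarith [Real.exp_pos t]) digit_mgf l
    _ = b ^ l * Real.exp (l * (t / b + t ^ 2 / 8)) := by rw [mul_pow, ← Real.exp_nat_mul]

theorem card_filter_lt_abs_frequency_sub_le {b d : ℕ} (hd : d < b) (l : ℕ) {ε : ℝ} (hε : 0 ≤ ε) :
    (#{w ∈ range (b ^ l) | ε < |((xblock b l w).count d : ℝ) / l - 1 / b|} : ℝ) ≤
      2 * (b ^ l * Real.exp (-(2 * l * ε ^ 2))) := by
  -- `t = ± 4 * ε` minimises the exponent `t ^ 2 / 8 - t * ε`.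
  have upper := card_filter_le_mul_count hd l (4 * ε) (4 * ε * (l * (1 / b + ε)))
  have lower := card_filter_le_mul_count hd l (-(4 * ε)) (-(4 * ε) * (l * (1 / b - ε)))
  have upper_exponent : (l : ℝ) * (4 * ε / b + (4 * ε) ^ 2 / 8) - 4 * ε * (l * (1 / b + ε)) =
      -(2 * l * ε ^ 2) := by ring
  have lower_exponent : (l : ℝ) * (-(4 * ε) / b + (-(4 * ε)) ^ 2 / 8) -
      -(4 * ε) * (l * (1 / b - ε)) = -(2 * l * ε ^ 2) := by ring
  rw [upper_exponent] at upper
  rw [lower_exponent] at lower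
  have covered : {w ∈ range (b ^ l) | ε < |((xblock b l w).count d : ℝ) / l - 1 / b|} ⊆
      {w ∈ range (b ^ l) | 4 * ε * (l * (1 / b + ε)) ≤ 4 * ε * (xblock b l w).count d} ∪
      {w ∈ range (b ^ l) | -(4 * ε) * (l * (1 / b - ε)) ≤ -(4 * ε) * (xblock b l w).count d} := by
    intro w hw
    obtain ⟨hw, hdev⟩ := mem_filter.mp hw
    have count_eq : (l : ℝ) * ((xblock b l w).count d / l) = (xblock b l w).count d :=
      mul_div_cancel_of_imp' fun hl ↦ by simp_all [xblock]
    rw [mem_union, mem_filter, mem_filter, ← count_eq, neg_mul, neg_mul, neg_le_neg_iff]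
    rcases lt_abs.mp hdev with h | h
    · exact Or.inl ⟨hw, by gcongr; linarith⟩
    · exact Or.inr ⟨hw, by gcongr; linarith⟩
  have union_bound := (card_le_card covered).trans (card_union_le _ _)
  rify at union_bound
  linarith

theorem card_filter_lt_simpleDisc_xblock_le (b l : ℕ) {ε : ℝ} (hε : 0 ≤ ε) :
    (#{w ∈ range (b ^ l) | ε < simpleDisc b (xblock b l w)} : ℝ) ≤
      2 * b * b ^ l * Real.exp (-(2 * l * ε ^ 2)) := by
  have covered : {w ∈ range (b ^ l) | ε < simpleDisc b (xblock b l w)} ⊆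
      (range b).biUnion fun d ↦
        {w ∈ range (b ^ l) | ε < |((xblock b l w).count d : ℝ) / l - 1 / b|} := by
    intro w hw
    obtain ⟨hw, hdisc⟩ := mem_filter.mp hw
    contrapose! hdisc
    refine simpleDisc_le hε fun d hd ↦ ?_
    rw [length_xblock]
    by_contra! h
    exact hdisc (mem_biUnion.mpr ⟨d, mem_range.mpr hd, mem_filter.mpr ⟨hw, h⟩⟩)
  calc (#{w ∈ range (b ^ l) | ε < simpleDisc b (xblock b l w)} : ℝ)
      ≤ ∑ d ∈ range b, (#{w ∈ range (b ^ l) |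
          ε < |((xblock b l w).count d : ℝ) / l - 1 / b|} : ℝ) :=
        mod_cast (card_le_card covered).trans card_biUnion_le
    _ ≤ ∑ d ∈ range b, 2 * (b ^ l * Real.exp (-(2 * l * ε ^ 2))) :=
        sum_le_sum fun d hd ↦ card_filter_lt_abs_frequency_sub_le (mem_range.mp hd) l hε
    _ = 2 * b * b ^ l * Real.exp (-(2 * l * ε ^ 2)) := by
        rw [sum_const, card_range, nsmul_eq_mul]
        ring

theorem exists_forall_simpleDisc_xblock_le {ι : Type*} {R : Finset ι} (hR : R.Nonempty)
    {B : Finset ℕ} {l : ℕ → ℕ} {x : ι → ℕ → ℕ} {k C : ℕ} {ε : ℝ} (hε : 0 ≤ ε)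
    (hB : ∀ b ∈ B, 0 < b) (hC : 2 * (∑ b ∈ B, (b : ℝ)) * C < Real.exp (2 * k * ε ^ 2))
    (hk : ∀ b ∈ B, k ≤ l b) (hl : ∀ b ∈ B, b ^ l b ≤ C * #R)
    (hinj : ∀ b ∈ B, Set.InjOn (fun r ↦ x r b % b ^ l b) R) :
    ∃ r ∈ R, ∀ b ∈ B, simpleDisc b (xblock b (l b) (x r b)) ≤ ε := by
  classical
  by_contra! hbad
  have covered : R ⊆ B.biUnion fun b ↦ {r ∈ R | ε < simpleDisc b (xblock b (l b) (x r b))} := by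
    intro r hr
    obtain ⟨b, hb, hdisc⟩ := hbad r hr
    exact mem_biUnion.mpr ⟨b, hb, mem_filter.mpr ⟨hr, hdisc⟩⟩
  have bad_card (b : ℕ) (hb : b ∈ B) :
      (#{r ∈ R | ε < simpleDisc b (xblock b (l b) (x r b))} : ℝ) ≤
        b * (2 * C * #R * Real.exp (-(2 * k * ε ^ 2))) := by
    have image_card : #{r ∈ R | ε < simpleDisc b (xblock b (l b) (x r b))} ≤
        #{w ∈ range (b ^ l b) | ε < simpleDisc b (xblock b (l b) w)} := by
      refine card_le_card_of_injOn (fun r ↦ x r b % b ^ l b) (fun r hr ↦ ?_)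
        ((hinj b hb).mono (filter_subset _ _))
      have mod_lt : x r b % b ^ l b < b ^ l b := Nat.mod_lt _ (Nat.pow_pos (hB b hb))
      simpa only [coe_filter, Set.mem_ofPred_eq, mem_range, xblock_mod_pow, mod_lt, true_and]
        using (mem_filter.mp hr).2
    calc (#{r ∈ R | ε < simpleDisc b (xblock b (l b) (x r b))} : ℝ)
        ≤ #{w ∈ range (b ^ l b) | ε < simpleDisc b (xblock b (l b) w)} := mod_cast image_card
      _ ≤ 2 * b * b ^ l b * Real.exp (-(2 * l b * ε ^ 2)) :=
          card_filter_lt_simpleDisc_xblock_le b (l b) hε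
      _ ≤ 2 * b * (C * #R) * Real.exp (-(2 * k * ε ^ 2)) := by
          gcongr
          · exact_mod_cast hl b hb
          · exact hk b hb
      _ = b * (2 * C * #R * Real.exp (-(2 * k * ε ^ 2))) := by ring
  have card_pos : (0 : ℝ) < #R := mod_cast hR.card_pos
  refine lt_irrefl (#R : ℝ) ?_
  calc (#R : ℝ) ≤ ∑ b ∈ B, (#{r ∈ R | ε < simpleDisc b (xblock b (l b) (x r b))} : ℝ) :=
        mod_cast (card_le_card covered).trans card_biUnion_le
    _ ≤ ∑ b ∈ B, b * (2 * C * #R * Real.exp (-(2 * k * ε ^ 2))) := sum_le_sum bad_card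
    _ = 2 * (∑ b ∈ B, (b : ℝ)) * C * Real.exp (-(2 * k * ε ^ 2)) * #R := by
        rw [← sum_mul]
        ring
    _ < Real.exp (2 * k * ε ^ 2) * Real.exp (-(2 * k * ε ^ 2)) * #R :=
        mul_lt_mul_of_pos_right (mul_lt_mul_of_pos_right hC (Real.exp_pos _)) card_pos
    _ = #R := by rw [← Real.exp_add, add_neg_cancel, Real.exp_zero, one_mul]

section AdicIntervals

/-- The `b`-adic interval `[a / b ^ m, (a + 1) / b ^ m)` of order `m` with numerator `a`. -/
def adicIco (b m a : ℕ) : Set ℝ :=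
  Set.Ico ((a : ℝ) / (b : ℝ) ^ m) (((a : ℝ) + 1) / (b : ℝ) ^ m)

variable {b c m n a a' : ℕ}

theorem mem_adicIco_iff (hb : 0 < b) {x : ℝ} : x ∈ adicIco b m a ↔ 0 ≤ x ∧ ⌊x * b ^ m⌋₊ = a := by
  have hpow : (0 : ℝ) < (b : ℝ) ^ m := by positivity
  rw [adicIco, Set.mem_Ico, div_le_iff₀ hpow, lt_div_iff₀ hpow]
  constructor
  · rintro ⟨hle, hlt⟩
    have hx : 0 ≤ x := nonneg_of_mul_nonneg_left (a.cast_nonneg.trans hle) hpow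
    exact ⟨hx, (Nat.floor_eq_iff (by positivity)).mpr ⟨hle, hlt⟩⟩
  · rintro ⟨hx, hfloor⟩
    exact (Nat.floor_eq_iff (by positivity)).mp hfloor

theorem left_mem_adicIco (hb : 0 < b) (m a : ℕ) : (a : ℝ) / (b : ℝ) ^ m ∈ adicIco b m a := by
  rw [mem_adicIco_iff hb, div_mul_cancel₀ _ (by positivity), Nat.floor_natCast]
  exact ⟨by positivity, rfl⟩

theorem eq_of_mem_adicIco (hb : 0 < b) {x : ℝ} (h : x ∈ adicIco b m a) (h' : x ∈ adicIco b m a') :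
    a = a' :=
  ((mem_adicIco_iff hb).mp h).2.symm.trans ((mem_adicIco_iff hb).mp h').2

theorem adicIco_add_subset (hb : 0 < b) (m l a : ℕ) :
    adicIco b (m + l) a ⊆ adicIco b m (a / b ^ l) := by
  intro x hx
  rw [mem_adicIco_iff hb] at hx ⊢
  have hscale : x * b ^ m = x * b ^ (m + l) / (b ^ l : ℕ) := by
    rw [pow_add, Nat.cast_pow]
    field_simp
  rw [hscale, Nat.floor_div_natCast, hx.2]
  exact ⟨hx.1, rfl⟩

theorem adicIco_mul_pow_add_subset (hb : 0 < b) {l r : ℕ} (hr : r < b ^ l) (m a : ℕ) :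
    adicIco b (m + l) (a * b ^ l + r) ⊆ adicIco b m a := by
  have div_eq : (a * b ^ l + r) / b ^ l = a := by
    rw [mul_comm, Nat.mul_add_div (by positivity), Nat.div_eq_of_lt hr, add_zero]
  simpa only [div_eq] using adicIco_add_subset hb m l (a * b ^ l + r)

theorem div_pow_eq_of_adicIco_subset (hb : 0 < b) {l : ℕ}
    (h : adicIco b (m + l) a' ⊆ adicIco b m a) : a' / b ^ l = a :=
  have hmem := left_mem_adicIco hb (m + l) a'
  eq_of_mem_adicIco hb (adicIco_add_subset hb m l a' hmem) (h hmem)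

theorem numerator_lt_of_adicIco_subset (hb : 0 < b) (hc : 0 < c)
    (h : adicIco c n a' ⊆ adicIco b m a) (ha : a < b ^ m) : a' < c ^ n := by
  have ha' : (a : ℝ) + 1 ≤ (b : ℝ) ^ m := mod_cast ha
  have left_lt_one : (a' : ℝ) / (c : ℝ) ^ n < 1 :=
    (h (left_mem_adicIco hc n a')).2.trans_le (div_le_one_of_le₀ ha' (by positivity))
  rw [div_lt_one (by positivity)] at left_lt_one
  exact_mod_cast left_lt_one

theorem volume_adicIco_div_le_iff (hb : 0 < b) (hc : 0 < c) (w : ℕ) :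
    volume (adicIco b m a) / w ≤ volume (adicIco c n a') ↔ c ^ n ≤ w * b ^ m := by
  have volume_eq (b m a : ℕ) (hb : 0 < b) : volume (adicIco b m a) = ((b ^ m : ℕ) : ℝ≥0∞)⁻¹ := by
    rw [adicIco, Real.volume_Ico, ← sub_div, add_sub_cancel_left, one_div,
      ENNReal.ofReal_inv_of_pos (by positivity), ← Nat.cast_pow, ENNReal.ofReal_natCast]
  rw [volume_eq b m a hb, volume_eq c n a' hc, div_eq_mul_inv, ← ENNReal.mul_inv (by simp)
    (by simp), ENNReal.inv_le_inv, mul_comm]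
  norm_cast

theorem pow_le_pow_of_adicIco_subset (hb : 0 < b) (hc : 0 < c)
    (h : adicIco c n a' ⊆ adicIco b m a) : b ^ m ≤ c ^ n := by
  simpa using (volume_adicIco_div_le_iff hc hb 1).mp (by simpa using measure_mono h)

theorem adicIco_subset_of_two_mul_pow_le (hb : 0 < b) (h : 2 * b ^ m ≤ c ^ n) :
    adicIco c n (a * c ^ n / b ^ m + 1) ⊆ adicIco b m a := by
  have hbm : 0 < b ^ m := by positivity
  have hcn : 0 < c ^ n := by lia
  have floor_le := Nat.div_mul_le_self (a * c ^ n) (b ^ m)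
  have lt_floor_add := Nat.lt_div_mul_add (a := a * c ^ n) hbm
  generalize a * c ^ n / b ^ m = q at floor_le lt_floor_add ⊢
  have left_le : a * c ^ n ≤ (q + 1) * b ^ m := by linarith
  have le_right : (q + 1 + 1) * b ^ m ≤ (a + 1) * c ^ n := by linarith
  refine Set.Ico_subset_Ico ?_ ?_
  · rw [div_le_div_iff₀ (mod_cast hbm) (mod_cast hcn)]
    exact_mod_cast left_le
  · rw [div_le_div_iff₀ (mod_cast hcn) (mod_cast hbm)]
    exact_mod_cast le_right

end AdicIntervals

section Sequences

/-- `I 2, …, I t` is a `t`-sequence, where `I b` is the `b`-adic interval of order `m b` with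
numerator `a b`. The values of `I`, `m` and `a` outside `[2, t]` are junk. -/
structure IsTSequence (t : ℕ) (I : ℕ → Set ℝ) (m a : ℕ → ℕ) : Prop where
  isAdic : ∀ b, 2 ≤ b → b ≤ t → a b < b ^ m b ∧ I b = adicIco b (m b) (a b)
  isNested : ∀ b, 2 ≤ b → b < t → I (b + 1) ⊆ I b ∧
    volume (I b) / (2 * ((b : ℝ≥0∞) + 1)) ≤ volume (I (b + 1))

theorem volume_div_le_iff_pow_succ_le {b m n a a' : ℕ} (hb : 0 < b) :
    volume (adicIco b m a) / (2 * ((b : ℝ≥0∞) + 1)) ≤ volume (adicIco (b + 1) n a') ↔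
      (b + 1) ^ n ≤ 2 * (b + 1) * b ^ m := by
  rw [← volume_adicIco_div_le_iff (a := a) (a' := a') hb b.succ_pos]
  push_cast
  rfl

namespace IsTSequence

variable {t : ℕ} {I : ℕ → Set ℝ} {m a : ℕ → ℕ} {b c : ℕ}

theorem subset_of_le (hI : IsTSequence t I m a) (hb : 2 ≤ b) (hbc : b ≤ c) (hc : c ≤ t) :
    I c ⊆ I b := by
  induction c, hbc using Nat.le_induction with
  | base => rfl
  | succ c hbc ih => exact (hI.isNested c (by lia) (by lia)).1.trans (ih (by lia))

theorem numerator_div_eq (hI : IsTSequence t I m a) (hb : 2 ≤ b) (hbt : b ≤ t) {n w : ℕ}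
    (hn : m b ≤ n) (h : adicIco b n w ⊆ I b) : w / b ^ (n - m b) = a b := by
  rw [(hI.isAdic b hb hbt).2] at h
  exact div_pow_eq_of_adicIco_subset (by lia) (by rwa [Nat.add_sub_cancel' hn])

theorem xblock_append_xblock (hI : IsTSequence t I m a) (hb : 2 ≤ b) (hbt : b ≤ t) {n w : ℕ}
    (hn : m b ≤ n) (h : adicIco b n w ⊆ I b) :
    xblock b (m b) (a b) ++ xblock b (n - m b) w = xblock b n w := by
  rw [← hI.numerator_div_eq hb hbt hn h, xblock_append, Nat.add_sub_cancel' hn]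

theorem pow_two_le (hI : IsTSequence t I m a) (hb : 2 ≤ b) (hbt : b ≤ t) : 2 ^ m 2 ≤ b ^ m b := by
  have hsub := hI.subset_of_le le_rfl hb hbt
  rw [(hI.isAdic b hb hbt).2, (hI.isAdic 2 le_rfl (hb.trans hbt)).2] at hsub
  exact pow_le_pow_of_adicIco_subset two_pos (by lia) hsub

theorem two_mul_pow_le (hI : IsTSequence t I m a) (hb : 2 ≤ b) (hbt : b ≤ t) :
    2 * b ^ m b ≤ 2 ^ (b - 2) * b ! * 2 ^ m 2 := by
  induction b, hb using Nat.le_induction with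
  | base => simp
  | succ b hb ih =>
    have hvol := (hI.isNested b hb hbt).2
    rw [(hI.isAdic b hb (by lia)).2, (hI.isAdic (b + 1) (by lia) hbt).2,
      volume_div_le_iff_pow_succ_le (by lia)] at hvol
    calc 2 * (b + 1) ^ m (b + 1) ≤ 2 * (b + 1) * (2 * b ^ m b) := by linarith
      _ ≤ 2 * (b + 1) * (2 ^ (b - 2) * b ! * 2 ^ m 2) := Nat.mul_le_mul_left _ (ih (by lia))
      _ = 2 ^ (b + 1 - 2) * (b + 1)! * 2 ^ m 2 := by
        rw [Nat.factorial_succ, Nat.sub_add_comm hb, pow_succ]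
        ring

variable {J : ℕ → Set ℝ} {M A : ℕ → ℕ}

theorem exponent_add_le {p c k q : ℕ} (hI : IsTSequence t I m a) (hJ : IsTSequence t J M A)
    (hLI : adicIco 2 p c ⊆ I t) (htq : t ≤ 2 ^ q) (hM : M 2 = p + k * q) (hb : 2 ≤ b)
    (hbt : b ≤ t) : m b + k ≤ M b := by
  have hLIb := hLI.trans (hI.subset_of_le hb hbt le_rfl)
  rw [(hI.isAdic b hb hbt).2] at hLIb
  refine (Nat.pow_le_pow_iff_right hb).mp ?_
  calc b ^ (m b + k) = b ^ m b * b ^ k := pow_add _ _ _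
    _ ≤ 2 ^ p * (2 ^ q) ^ k :=
      Nat.mul_le_mul (pow_le_pow_of_adicIco_subset (by lia) two_pos hLIb)
        (Nat.pow_le_pow_left (hbt.trans htq) k)
    _ = 2 ^ M 2 := by rw [hM, pow_add, mul_comm k, pow_mul]
    _ ≤ b ^ M b := hJ.pow_two_le hb hbt

theorem pow_exponent_sub_le {p c K : ℕ} (hI : IsTSequence t I m a) (hJ : IsTSequence t J M A)
    (hLμ : volume (I t) / 4 ≤ volume (adicIco 2 p c)) (hM : M 2 = p + K) (hb : 2 ≤ b)
    (hbt : b ≤ t) (hmM : m b ≤ M b) :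
    b ^ (M b - m b) ≤ (2 ^ (t - 2) * t !) ^ 2 * 2 ^ K := by
  have hp : 2 ^ p ≤ 4 * t ^ m t := by
    rw [(hI.isAdic t (hb.trans hbt) le_rfl).2] at hLμ
    exact (volume_adicIco_div_le_iff (by lia) two_pos 4).mp hLμ
  have hW : 2 ^ (b - 2) * b ! ≤ 2 ^ (t - 2) * t ! := by gcongr; exact one_le_two
  have hIt := hI.two_mul_pow_le (hb.trans hbt) le_rfl
  have hJb := hJ.two_mul_pow_le hb hbt
  rw [hM, pow_add] at hJb
  generalize 2 ^ (t - 2) * t ! = W at hW hIt ⊢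
  refine Nat.le_of_mul_le_mul_left (c := 2 * 2 ^ m 2) ?_ (by positivity)
  calc 2 * 2 ^ m 2 * b ^ (M b - m b) ≤ 2 * b ^ m b * b ^ (M b - m b) :=
        Nat.mul_le_mul_right _ (Nat.mul_le_mul_left 2 (hI.pow_two_le hb hbt))
    _ = 2 * b ^ M b := by rw [mul_assoc, ← pow_add, Nat.add_sub_cancel' hmM]
    _ ≤ W * (2 ^ p * 2 ^ K) := hJb.trans (Nat.mul_le_mul_right _ hW)
    _ ≤ W * (2 * (W * 2 ^ m 2) * 2 ^ K) := by
        gcongr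
        linarith
    _ = 2 * 2 ^ m 2 * (W ^ 2 * 2 ^ K) := by ring

end IsTSequence

/-- The exponents, indexed by the base, of the intervals obtained from a dyadic interval of order
`m₀` by choosing in each base the largest length that is at most half the previous one: an interval
of this length fits wherever the previous one lies. They do not depend on the numerators. -/
def greedyExponent (m₀ : ℕ) : ℕ → ℕ
  | b + 3 => Nat.clog (b + 3) (2 * (b + 2) ^ greedyExponent m₀ (b + 2))
  | _ => m₀

/-- The numerators matching `greedyExponent`, starting from the dyadic interval with numerator
`a₀`. The `+ 1` skips the interval that may straddle the left endpoint of the previous one. -/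
def greedyNumerator (m₀ a₀ : ℕ) : ℕ → ℕ
  | b + 3 => greedyNumerator m₀ a₀ (b + 2) * (b + 3) ^ greedyExponent m₀ (b + 3) /
      (b + 2) ^ greedyExponent m₀ (b + 2) + 1
  | _ => a₀

variable {m₀ a₀ b : ℕ}

theorem greedyExponent_succ (hb : 2 ≤ b) :
    greedyExponent m₀ (b + 1) = Nat.clog (b + 1) (2 * b ^ greedyExponent m₀ b) := by
  obtain ⟨b, rfl⟩ := Nat.exists_eq_add_of_le' hb
  rw [greedyExponent]

theorem greedyNumerator_succ (hb : 2 ≤ b) :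
    greedyNumerator m₀ a₀ (b + 1) = greedyNumerator m₀ a₀ b * (b + 1) ^ greedyExponent m₀ (b + 1) /
      b ^ greedyExponent m₀ b + 1 := by
  obtain ⟨b, rfl⟩ := Nat.exists_eq_add_of_le' hb
  rw [greedyNumerator]

theorem pow_clog_le_mul {b n : ℕ} (hb : 1 < b) (hn : n ≠ 0) : b ^ Nat.clog b n ≤ b * n := by
  have clog_le : Nat.clog b n ≤ Nat.log b n + 1 :=
    Nat.clog_le_of_le_pow (Nat.lt_pow_succ_log_self hb n).le
  calc b ^ Nat.clog b n ≤ b ^ (Nat.log b n + 1) := Nat.pow_le_pow_right (by lia) clog_le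
    _ = b * b ^ Nat.log b n := pow_succ' _ _
    _ ≤ b * n := Nat.mul_le_mul_left _ (Nat.pow_log_le_self b hn)

theorem greedy_succ_subset (m₀ a₀ : ℕ) (hb : 2 ≤ b) :
    adicIco (b + 1) (greedyExponent m₀ (b + 1)) (greedyNumerator m₀ a₀ (b + 1)) ⊆
      adicIco b (greedyExponent m₀ b) (greedyNumerator m₀ a₀ b) := by
  rw [greedyNumerator_succ hb]
  refine adicIco_subset_of_two_mul_pow_le (by lia) ?_
  rw [greedyExponent_succ hb]
  exact Nat.le_pow_clog (by lia) _

theorem greedy_subset (m₀ a₀ : ℕ) (hb : 2 ≤ b) :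
    adicIco b (greedyExponent m₀ b) (greedyNumerator m₀ a₀ b) ⊆ adicIco 2 m₀ a₀ := by
  induction b, hb using Nat.le_induction with
  | base => rfl
  | succ b hb ih => exact (greedy_succ_subset m₀ a₀ hb).trans ih

theorem isTSequence_greedy (ha : a₀ < 2 ^ m₀) (t : ℕ) :
    IsTSequence t (fun b ↦ adicIco b (greedyExponent m₀ b) (greedyNumerator m₀ a₀ b))
      (greedyExponent m₀) (greedyNumerator m₀ a₀) := by
  refine ⟨fun b hb _ ↦ ⟨?_, rfl⟩, fun b hb _ ↦ ⟨greedy_succ_subset m₀ a₀ hb, ?_⟩⟩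
  · exact numerator_lt_of_adicIco_subset two_pos (by lia) (greedy_subset m₀ a₀ hb) ha
  · rw [volume_div_le_iff_pow_succ_le (by lia), greedyExponent_succ hb]
    exact (pow_clog_le_mul (by lia) (by positivity)).trans_eq (by ring)

theorem greedyNumerator_injective (m₀ : ℕ) (hb : 2 ≤ b) :
    Function.Injective fun a₀ ↦ greedyNumerator m₀ a₀ b := by
  intro a₀ a₁ h
  have common_point := left_mem_adicIco (by lia : 0 < b) (greedyExponent m₀ b)
    (greedyNumerator m₀ a₀ b)
  have subset₀ := greedy_subset m₀ a₀ hb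
  have subset₁ := greedy_subset m₀ a₁ hb
  rw [← show greedyNumerator m₀ a₀ b = greedyNumerator m₀ a₁ b from h] at subset₁
  exact eq_of_mem_adicIco two_pos (subset₀ common_point) (subset₁ common_point)

end Sequences

theorem log_threshold_le {i : ℕ} {δ : ℝ}
    (hδ : δ = 1 / (2 ^ (2 * i - 2) * (Nat.factorial (i + 1) : ℝ) ^ 2)) :
    Real.log (2 * (((i + 1 : ℕ) : ℝ) * (2 ^ (i + 1 - 2) * ((i + 1)! : ℝ))) ^ 2) /
        (2 * (1 / ((i : ℝ) + 2)) ^ 2) ≤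
      -Real.log (δ / (2 * ((i : ℝ) + 1) ^ 2)) * (6 * ((i : ℝ) + 2) ^ 2) := by
  have inv_eq : (δ / (2 * ((i : ℝ) + 1) ^ 2))⁻¹ =
      2 * (((i + 1 : ℕ) : ℝ) * (2 ^ (i + 1 - 2) * ((i + 1)! : ℝ))) ^ 2 := by
    rw [hδ, show 2 * i - 2 = (i + 1 - 2) * 2 by lia, pow_mul]
    push_cast
    field_simp
  rw [← Real.log_inv, inv_eq]
  have one_le : (1 : ℝ) ≤ 2 * (((i + 1 : ℕ) : ℝ) * (2 ^ (i + 1 - 2) * ((i + 1)! : ℝ))) ^ 2 := by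
    exact_mod_cast Nat.one_le_iff_ne_zero.mpr (by positivity)
  have log_nonneg := Real.log_nonneg one_le
  generalize Real.log _ = y at log_nonneg ⊢
  calc y / (2 * (1 / ((i : ℝ) + 2)) ^ 2) = y * ((i + 2) ^ 2 / 2) := by field_simp
    _ ≤ y * (6 * (i + 2) ^ 2) := by
      gcongr
      nlinarith [sq_nonneg ((i : ℝ) + 2)]

theorem injOn_mod_of_div_eq {ι : Type*} {s : Set ι} {f : ι → ℕ} {n q : ℕ} (hf : Set.InjOn f s)
    (h : ∀ x ∈ s, f x / n = q) : Set.InjOn (fun x ↦ f x % n) s := by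
  intro x hx y hy hmod
  refine hf hx hy ?_
  rw [← Nat.div_add_mod (f x) n, ← Nat.div_add_mod (f y) n, h x hx, h y hy]
  exact congrArg _ hmod

theorem two_mul_sum_Icc_mul_sq_lt_exp {t k W : ℕ} {ε : ℝ} (hε : 0 < ε)
    (hk : Real.log (2 * (t * W) ^ 2) / (2 * ε ^ 2) < k) :
    2 * (∑ b ∈ Icc 2 t, (b : ℝ)) * (W ^ 2 : ℕ) < Real.exp (2 * k * ε ^ 2) := by
  rw [div_lt_iff₀ (by positivity)] at hk
  have sum_le : ∑ b ∈ Icc 2 t, (b : ℝ) ≤ t * t := by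
    refine (sum_le_card_nsmul _ _ (t : ℝ) fun b hb ↦ mod_cast (mem_Icc.mp hb).2).trans ?_
    rw [nsmul_eq_mul, Nat.card_Icc]
    gcongr
    lia
  calc 2 * (∑ b ∈ Icc 2 t, (b : ℝ)) * (W ^ 2 : ℕ)
      ≤ 2 * (t * t) * (W ^ 2 : ℕ) := by gcongr
    _ = 2 * (t * W) ^ 2 := by
      push_cast
      ring
    _ ≤ Real.exp (Real.log (2 * (t * W) ^ 2)) := Real.le_exp_log _
    _ < Real.exp (2 * k * ε ^ 2) := Real.exp_lt_exp.mpr (by linarith)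

theorem exists_suitable_refinement_general {t k : ℕ} {ε : ℝ} (hε : 0 < ε)
    (hk : Real.log (2 * (t * (2 ^ (t - 2) * t !)) ^ 2) / (2 * ε ^ 2) < k)
    {I : ℕ → Set ℝ} {m a : ℕ → ℕ} (hI : IsTSequence t I m a)
    {p c : ℕ} (hc : c < 2 ^ p) (hLI : adicIco 2 p c ⊆ I t)
    (hLμ : volume (I t) / 4 ≤ volume (adicIco 2 p c)) :
    ∃ r < 2 ^ (k * Nat.clog 2 t), ∃ (J : ℕ → Set ℝ) (m' a' : ℕ → ℕ),
      IsTSequence t J m' a' ∧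
      J 2 = adicIco 2 (p + k * Nat.clog 2 t) (c * 2 ^ (k * Nat.clog 2 t) + r) ∧
      ∀ b, 2 ≤ b → b ≤ t → ∃ u : List ℕ, u ≠ [] ∧
        xblock b (m b) (a b) ++ u = xblock b (m' b) (a' b) ∧ simpleDisc b u ≤ ε := by
  set K := k * Nat.clog 2 t
  let M := greedyExponent (p + K)
  let A (r : ℕ) := greedyNumerator (p + K) (c * 2 ^ K + r)
  have hJL {r : ℕ} (hr : r < 2 ^ K) : adicIco 2 (p + K) (c * 2 ^ K + r) ⊆ adicIco 2 p c :=
    adicIco_mul_pow_add_subset two_pos hr p c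
  have hJ {r : ℕ} (hr : r < 2 ^ K) : IsTSequence t (fun b ↦ adicIco b (M b) (A r b)) M (A r) :=
    isTSequence_greedy (numerator_lt_of_adicIco_subset two_pos two_pos (hJL hr) hc) t
  have hJI {b : ℕ} (hb : 2 ≤ b) (hbt : b ≤ t) {r : ℕ} (hr : r < 2 ^ K) :
      adicIco b (M b) (A r b) ⊆ I b :=
    (greedy_subset _ _ hb).trans
      ((hJL hr).trans (hLI.trans (hI.subset_of_le hb hbt le_rfl)))
  have hM {b : ℕ} (hb : 2 ≤ b) (hbt : b ≤ t) : m b + k ≤ M b :=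
    hI.exponent_add_le (hJ (by positivity)) hLI (Nat.le_pow_clog one_lt_two t) rfl hb hbt
  have hl (b : ℕ) (hb : b ∈ Icc 2 t) :
      b ^ (M b - m b) ≤ (2 ^ (t - 2) * t !) ^ 2 * #(range (2 ^ K)) := by
    obtain ⟨hb, hbt⟩ := mem_Icc.mp hb
    rw [card_range]
    exact hI.pow_exponent_sub_le (hJ (by positivity)) hLμ rfl hb hbt (by linarith [hM hb hbt])
  have hinj (b : ℕ) (hb : b ∈ Icc 2 t) :
      Set.InjOn (fun r ↦ A r b % b ^ (M b - m b)) (range (2 ^ K)) := by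
    obtain ⟨hb, hbt⟩ := mem_Icc.mp hb
    exact injOn_mod_of_div_eq
      ((greedyNumerator_injective _ hb).comp (add_right_injective _)).injOn fun r hr ↦
        hI.numerator_div_eq hb hbt (by linarith [hM hb hbt]) (hJI hb hbt (mem_range.mp hr))
  obtain ⟨r, hr, hdisc⟩ := exists_forall_simpleDisc_xblock_le
    (nonempty_range_iff.mpr (by positivity)) hε.le (by grind)
    (two_mul_sum_Icc_mul_sq_lt_exp hε (mod_cast hk)) (by grind) hl hinj
  rw [mem_range] at hr
  refine ⟨r, hr, _, M, A r, hJ hr, rfl, fun b hb hbt ↦ ⟨xblock b (M b - m b) (A r b), ?_,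
    hI.xblock_append_xblock hb hbt (by linarith [hM hb hbt]) (hJI hb hbt hr),
    hdisc b (mem_Icc.mpr ⟨hb, hbt⟩)⟩⟩
  have hk_pos : 0 < k := by
    have log_nonneg := Real.log_natCast_nonneg (2 * (t * (2 ^ (t - 2) * t !)) ^ 2)
    push_cast at log_nonneg
    exact_mod_cast (div_nonneg log_nonneg (by positivity)).trans_lt hk
  rw [← List.length_pos_iff, length_xblock]
  linarith [hM hb hbt, Nat.le_sub_of_add_le' (hM hb hbt)]

/-- Lemma 4.8: suitability of one subinterval of the partition.  Let `i ≥ 1`, let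
`δ_i = 1/(2^{2i−2}·((i+1)!)²)`, and let `k` be the least integer greater than
`max(⌈6(i+2)⌉, −ln(δ_i/(2(i+1)²))·6(i+2)²)`.  Let `(I_2, …, I_{i+1})` be an
`(i+1)`-sequence, where `I_b = [a_b/b^{m_b}, (a_b+1)/b^{m_b})`, let
`L = [c/2^p, (c+1)/2^p)` be a dyadic subinterval of `I_{i+1}` with
`μ(L) ≥ μ(I_{i+1})/4`, and partition `L` into `2^{k·⌈log₂(i+1)⌉}` dyadic subintervals
of equal measure.  Then some subinterval `J_2` of this partition extends to an
`(i+1)`-sequence `(J_2, …, J_{i+1})` such that for every base `2 ≤ b ≤ i+1`,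
`x_b(I⃗)` is a proper prefix of `x_b(J⃗)` and the block `u_b` with
`x_b(I⃗)·u_b = x_b(J⃗)` satisfies `D(u_b, b) ≤ 1/(i+2)`. -/
theorem exists_suitable_refinement
    (i : ℕ) (hi : 1 ≤ i)
    (δ : ℝ) (hδ : δ = 1 / (2 ^ (2 * i - 2) * ((Nat.factorial (i + 1) : ℝ)) ^ 2))
    (k : ℕ)
    (hk₁ : (k : ℝ) > max ((⌈6 * ((i : ℝ) + 2)⌉ : ℤ) : ℝ)
      (-Real.log (δ / (2 * ((i : ℝ) + 1) ^ 2)) * (6 * ((i : ℝ) + 2) ^ 2)))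
    (hk₂ : ∀ j : ℕ, (j : ℝ) > max ((⌈6 * ((i : ℝ) + 2)⌉ : ℤ) : ℝ)
      (-Real.log (δ / (2 * ((i : ℝ) + 1) ^ 2)) * (6 * ((i : ℝ) + 2) ^ 2)) → k ≤ j)
    (I : ℕ → Set ℝ) (m a : ℕ → ℕ)
    (hrep : ∀ b : ℕ, 2 ≤ b → b ≤ i + 1 → a b < b ^ m b ∧
      I b = Set.Ico ((a b : ℝ) / (b : ℝ) ^ m b) (((a b : ℝ) + 1) / (b : ℝ) ^ m b))
    (hnest : ∀ b : ℕ, 2 ≤ b → b < i + 1 → I (b + 1) ⊆ I b ∧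
      volume (I b) / (2 * ((b : ℝ≥0∞) + 1)) ≤ volume (I (b + 1)))
    (p c : ℕ) (hc : c < 2 ^ p) (L : Set ℝ)
    (hL : L = Set.Ico ((c : ℝ) / 2 ^ p) (((c : ℝ) + 1) / 2 ^ p))
    (hLsub : L ⊆ I (i + 1)) (hLμ : volume (I (i + 1)) / 4 ≤ volume L) :
    ∃ r : ℕ, r < 2 ^ (k * Nat.clog 2 (i + 1)) ∧
      ∃ (J : ℕ → Set ℝ) (m' a' : ℕ → ℕ),
        (∀ b : ℕ, 2 ≤ b → b ≤ i + 1 → a' b < b ^ m' b ∧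
          J b = Set.Ico ((a' b : ℝ) / (b : ℝ) ^ m' b) (((a' b : ℝ) + 1) / (b : ℝ) ^ m' b)) ∧
        (∀ b : ℕ, 2 ≤ b → b < i + 1 → J (b + 1) ⊆ J b ∧
          volume (J b) / (2 * ((b : ℝ≥0∞) + 1)) ≤ volume (J (b + 1))) ∧
        J 2 = Set.Ico
          (((c * 2 ^ (k * Nat.clog 2 (i + 1)) + r : ℕ) : ℝ) / 2 ^ (p + k * Nat.clog 2 (i + 1)))
          ((((c * 2 ^ (k * Nat.clog 2 (i + 1)) + r : ℕ) : ℝ) + 1) /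
            2 ^ (p + k * Nat.clog 2 (i + 1))) ∧
        ∀ b : ℕ, 2 ≤ b → b ≤ i + 1 →
          ∃ u : List ℕ, u ≠ [] ∧ xblock b (m b) (a b) ++ u = xblock b (m' b) (a' b) ∧
            simpleDisc b u ≤ 1 / ((i : ℝ) + 2) := by
  subst hL
  obtain ⟨r, hr, J, m', a', hJ, hJ₂, hblocks⟩ :=
    exists_suitable_refinement_general (by positivity)
      ((log_threshold_le hδ).trans_lt (lt_of_le_of_lt (le_max_right _ _) hk₁))
      ⟨hrep, hnest⟩ hc hLsub hLμ
  exact ⟨r, hr, J, m', a', hJ.isAdic, hJ.isNested, hJ₂, hblocks⟩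
end
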